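/- Let a_n ∈ (0,1) with a_n → 1, and let (φ_n), (k_n) be real sequences with φ_n > 0 and k_n < 0 for all n, converging to limits φ_∞, k_∞ with φ_∞² + k_∞ > 0, and such that φ_n² + k_n ≥ δ̄ for some fixed δ̄ > 0 and all n. Define u_n(x₁,x₂) = 2 log( 2(1−a_n²)φ_n / ( φ_n²((1−a_n x₁)² + a_n² x₂²) + k_n((x₁−a_n)² + x₂²) ) ). Then lim_{n→∞} ∫_𝔻 x₁ u_n dx = π and lim_{n→∞} ∫_{∂𝔻} x₁ u_n ds = 4π. -/

import Mathlib

open MeasureTheory Real Filter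

noncomputable section

/-- The open unit disk in ℝ² ≅ ℂ. -/
def unitDisk : Set ℂ := Metric.ball 0 1

/-- The unit circle ∂𝔻. -/
def unitCircle : Set ℂ := Metric.sphere 0 1

/-- The closed unit disk. -/
def closedUnitDisk : Set ℂ := Metric.closedBall 0 1

/-- Directional derivative of `u` at `x` in direction `v`. -/
def pd (u : ℂ → ℝ) (v x : ℂ) : ℝ := fderiv ℝ u x v

/-- Laplacian of `u` at `x`. -/
def lap (u : ℂ → ℝ) (x : ℂ) : ℝ :=
  fderiv ℝ (fun y => pd u 1 y) x 1 + fderiv ℝ (fun y => pd u Complex.I y) x Complex.I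

/-- Squared norm of the gradient, |∇u|². -/
def gradSq (u : ℂ → ℝ) (x : ℂ) : ℝ := pd u 1 x ^ 2 + pd u Complex.I x ^ 2

/-- Outward normal derivative ∂_ν u(x) = ∇u(x)·x at a boundary point. -/
def nderiv (u : ℂ → ℝ) (x : ℂ) : ℝ := x.re * pd u 1 x + x.im * pd u Complex.I x

/-- Tangential derivative ∂_τ u(x) = ∇u(x)·(−x₂,x₁) at a boundary point. -/
def tderiv (u : ℂ → ℝ) (x : ℂ) : ℝ := -x.im * pd u 1 x + x.re * pd u Complex.I x

/-- Unit-speed parametrization of the unit circle. -/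
def bpt (θ : ℝ) : ℂ := Complex.exp ((θ : ℂ) * Complex.I)

/-- Integral over ∂𝔻 with respect to arclength. -/
def bint (f : ℂ → ℝ) : ℝ := ∫ θ in (0:ℝ)..(2 * π), f (bpt θ)

/-- A solution of the prescribed curvature problem for `(K, h)`. -/
def IsSolution (K h u : ℂ → ℝ) : Prop :=
  ContDiff ℝ 2 u ∧
  (∀ x ∈ unitDisk, -lap u x = 2 * K x * Real.exp (u x)) ∧
  (∀ x ∈ unitCircle, nderiv u x + 2 = 2 * h x * Real.exp (u x / 2))

/-- The auxiliary function Φ = H + √(H² + K). -/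
def Phi (K H : ℂ → ℝ) (x : ℂ) : ℝ := H x + Real.sqrt (H x ^ 2 + K x)

/-- `H` is the harmonic extension of `h`, C¹ up to the boundary. -/
def IsHarmExt (h H : ℂ → ℝ) : Prop :=
  ContDiff ℝ 1 H ∧ ContDiffOn ℝ 2 H unitDisk ∧
  (∀ x ∈ unitDisk, lap H x = 0) ∧ ∀ x ∈ unitCircle, H x = h x

/-- K_ε. -/
def Keps (K : ℂ → ℝ) (ε : ℝ) (x : ℂ) : ℝ := (K x - ε / 2) / (1 + ε)

/-- h_ε. -/
def heps (h : ℂ → ℝ) (ε : ℝ) (x : ℂ) : ℝ := h x / (1 + ε)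

/-- K̃_ε. -/
def Ktil (ε : ℝ) : ℝ := -ε / (2 * (1 + ε))

/-- h̃_ε. -/
def htil (ε : ℝ) : ℝ := 1 / (1 + ε)

/-- A solution of the perturbed problem (P_ε). -/
def IsPerturbedSolution (K h : ℂ → ℝ) (ε : ℝ) (u : ℂ → ℝ) : Prop :=
  ContDiff ℝ 2 u ∧
  (∀ x ∈ unitDisk, -lap u x + 2 * Ktil ε = 2 * Keps K ε x * Real.exp (u x)) ∧
  (∀ x ∈ unitCircle, nderiv u x + 2 * htil ε = 2 * heps h ε x * Real.exp (u x / 2))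

/-- The energy functional I. -/
def Ifun (K h u : ℂ → ℝ) : ℝ :=
  (∫ x in unitDisk, ((1/2) * gradSq u x - 2 * K x * Real.exp (u x))) +
  bint (fun x => 2 * u x - 4 * h x * Real.exp (u x / 2))

/-- The perturbation term T. -/
def Tfun (u : ℂ → ℝ) : ℝ :=
  ∫ x in unitDisk, ((1/2) * gradSq u x + Real.exp (u x) - u x)

/-- The perturbed functional I_ε. -/
def Ieps (K h : ℂ → ℝ) (ε : ℝ) (u : ℂ → ℝ) : ℝ := (Ifun K h u + ε * Tfun u) / (1 + ε)

/-- The blow-up bubble profile concentrating at (1,0). -/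
def prof (aN φN kN : ℝ) (x : ℂ) : ℝ :=
  2 * Real.log (2 * (1 - aN ^ 2) * φN /
    (φN ^ 2 * ((1 - aN * x.re) ^ 2 + aN ^ 2 * x.im ^ 2)
      + kN * ((x.re - aN) ^ 2 + x.im ^ 2)))

/-!
If `f` is holomorphic near the closed disk of radius `R` about `c`, then, because
`conj (z - c) = R² / (z - c)` on the circle, the Cauchy formulas show that `Re (z - c) f z` has
average `(R² / 2) deriv f c` over it. For `f z = log C + 2 log (1 - w z)` and `c = 0` this evaluates
the average of `x₁ log (C |1 - w x|²)` as `-R² Re w`.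

The denominator of `prof a φ k` is `φ² |1 - a x|² + k |x - a|²`, and `|1 - a x|² - |x - a|²` equals
`(1 - a²) (1 - |x|²)`. On the unit circle the denominator is therefore `(φ² + k) |1 - a x|²`, so the
boundary integral is exactly `4 π a`. In the disk the constant numerator contributes nothing
since `x₁` integrates to zero. As `a → 1` the denominator tends to `(φ² + k) |1 - x|²`, whose
logarithm integrates against `x₁` to `-π / 2` by polar coordinates. Convergence is dominated, since
the denominator is bounded and is at least `(φ² + k) a² x₂²`.
-/

section CircleAverage

open Metric Set

variable {c : ℂ} {R : ℝ}

section VectorValued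

variable {E : Type*} [NormedAddCommGroup E] [NormedSpace ℂ E] {f : ℂ → E}

theorem circleAverage_inv_sub_smul_eq_deriv [CompleteSpace E] (hR : 0 < R)
    (hf : DiffContOnCl ℂ f (ball c R)) :
    circleAverage (fun z => (z - c)⁻¹ • f z) c R = deriv f c := by
  rw [circleAverage_eq_circleIntegral hR.ne', inv_smul_eq_iff₀ Complex.two_pi_I_ne_zero,
    ← hf.deriv_eq_smul_circleIntegral hR]
  simp only [smul_smul, ← sq, inv_pow, one_div]

theorem re_sub_smul_eqOn_sphere (f : ℂ → E) (hR : R ≠ 0) :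
    EqOn (fun z => ((z - c).re : ℂ) • f z)
      ((2⁻¹ : ℂ) • (fun z => (z - c) • f z) + (R ^ 2 / 2 : ℂ) • fun z => (z - c)⁻¹ • f z)
      (sphere c R) := by
  intro z hz
  have conj_eq : (starRingEnd ℂ) (z - c) = R ^ 2 / (z - c) := by
    rw [eq_div_iff (sub_ne_zero.2 (ne_of_mem_sphere hz hR)), Complex.conj_mul',
      mem_sphere_iff_norm.1 hz]
  simp only [Pi.add_apply, Pi.smul_apply, smul_smul, ← add_smul, Complex.re_eq_add_conj, conj_eq]
  congr 1
  ring

theorem circleAverage_re_sub_smul [CompleteSpace E] (hf : DiffContOnCl ℂ f (ball c |R|)) :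
    circleAverage (fun z => ((z - c).re : ℂ) • f z) c R = (R ^ 2 / 2 : ℂ) • deriv f c := by
  wlog hR : 0 ≤ R generalizing R
  · simpa using this (R := -R) (by simpa using hf) (by linarith)
  obtain rfl | hR := hR.eq_or_lt
  · simp
  have average_sub_smul : circleAverage (fun z => (z - c) • f z) c R = 0 := by
    simpa using ((differentiable_id.sub_const c).diffContOnCl.smul hf).circleAverage
  rw [abs_of_pos hR] at hf
  have f_cont : ContinuousOn f (sphere c R) := hf.continuousOn_ball.mono sphere_subset_closedBall
  have sub_ne_zero_of_mem : ∀ z ∈ sphere c R, z - c ≠ 0 :=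
    fun z hz => sub_ne_zero.2 (ne_of_mem_sphere hz hR.ne')
  rw [circleAverage_congr_sphere (by rw [abs_of_pos hR]; exact re_sub_smul_eqOn_sphere f hR.ne'),
    circleAverage_add, circleAverage_smul, circleAverage_smul, average_sub_smul,
    circleAverage_inv_sub_smul_eq_deriv hR hf, smul_zero, zero_add]
  · exact ContinuousOn.circleIntegrable hR.le (by fun_prop)
  · exact ContinuousOn.circleIntegrable hR.le (by fun_prop (disch := assumption))

end VectorValued

theorem circleAverage_re_sub_mul_re {f : ℂ → ℂ} (hf : DiffContOnCl ℂ f (ball c |R|)) :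
    circleAverage (fun z => (z - c).re * (f z).re) c R = R ^ 2 / 2 * (deriv f c).re := by
  have f_cont := hf.continuousOn_ball.mono sphere_subset_closedBall
  have integrable : CircleIntegrable (fun z => ((z - c).re : ℂ) • f z) c R :=
    ContinuousOn.circleIntegrable' (by fun_prop)
  calc circleAverage (fun z => (z - c).re * (f z).re) c R
      = circleAverage (Complex.reCLM ∘ fun z => ((z - c).re : ℂ) • f z) c R := by
        congr with z
        simp
    _ = ((R ^ 2 / 2 : ℂ) • deriv f c).re := by
        rw [Complex.reCLM.circleAverage_comp_comm integrable, circleAverage_re_sub_smul hf,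
          Complex.reCLM_apply]
    _ = R ^ 2 / 2 * (deriv f c).re := by
        rw [smul_eq_mul, ← Complex.re_ofReal_mul]
        push_cast
        rfl

theorem circleAverage_re_sub (c : ℂ) (R : ℝ) : circleAverage (fun z => (z - c).re) c R = 0 := by
  simpa using circleAverage_re_sub_mul_re (f := fun _ => 1) (c := c) (R := R) diffContOnCl_const

theorem circleAverage_re_mul_log_mul_norm_one_sub_mul_sq {C : ℝ} (hC : C ≠ 0) {w : ℂ}
    (hw : ‖w‖ * |R| < 1) :
    circleAverage (fun z => z.re * log (C * ‖1 - w * z‖ ^ 2)) 0 R = -(w.re * R ^ 2) := by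
  have mem_slitPlane : ∀ z ∈ closedBall (0 : ℂ) |R|, 1 - w * z ∈ Complex.slitPlane := by
    intro z hz
    have norm_lt : ‖-(w * z)‖ < 1 := by
      rw [norm_neg, norm_mul]
      exact (mul_le_mul_of_nonneg_left (mem_closedBall_zero_iff.1 hz) (norm_nonneg w)).trans_lt hw
    exact Complex.mem_slitPlane_of_norm_lt_one norm_lt
  let f : ℂ → ℂ := fun z => log C + 2 * Complex.log (1 - w * z)
  have f_diff : DiffContOnCl ℂ f (ball 0 |R|) := by
    refine DifferentiableOn.diffContOnCl fun z hz => ?_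
    have one_sub_mem := mem_slitPlane z (closure_ball_subset_closedBall hz)
    fun_prop (disch := assumption)
  have log_deriv : HasDerivAt (fun z => Complex.log (1 - w * z)) (-w) 0 := by
    simpa using (((hasDerivAt_id (0 : ℂ)).const_mul w).const_sub 1).clog (by simp)
  have f_deriv : HasDerivAt f (2 * -w) 0 := (log_deriv.const_mul 2).const_add _
  have f_re : EqOn (fun z => z.re * log (C * ‖1 - w * z‖ ^ 2)) (fun z => (z - 0).re * (f z).re)
      (sphere 0 |R|) := by
    intro z hz
    have norm_ne : ‖1 - w * z‖ ≠ 0 := norm_ne_zero_iff.2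
      (Complex.slitPlane_ne_zero (mem_slitPlane z (sphere_subset_closedBall hz)))
    simp [f, Complex.log_re, log_mul hC, norm_ne]
  rw [circleAverage_congr_sphere f_re, circleAverage_re_sub_mul_re f_diff, f_deriv.deriv]
  simp only [Complex.mul_re, Complex.neg_re, Complex.neg_im, Complex.re_ofNat, Complex.im_ofNat]
  ring

end CircleAverage

section PolarCoordinates

open Metric Set

variable {E : Type*} [NormedAddCommGroup E] [NormedSpace ℝ E] {f : ℂ → E}

theorem polarCoord_symm_eq_circleMap (p : ℝ × ℝ) :
    Complex.polarCoord.symm p = circleMap 0 p.1 p.2 := by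
  simp [circleMap, Complex.exp_mul_I]

theorem integrableOn_smul_comp_circleMap (hf : Integrable f) :
    IntegrableOn (fun p : ℝ × ℝ => p.1 • f (circleMap 0 p.1 p.2)) polarCoord.target := by
  have integrable_prod : IntegrableOn (f ∘ Complex.measurableEquivRealProd.symm)
      (polarCoord.symm '' polarCoord.target) :=
    (Complex.volume_preserving_equiv_real_prod.symm.integrable_comp_emb
      Complex.measurableEquivRealProd.symm.measurableEmbedding |>.2 hf).integrableOn
  rw [integrableOn_image_iff_integrableOn_abs_det_fderiv_smul volume
    polarCoord.open_target.measurableSet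
    (fun p _ => (hasFDerivAt_polarCoord_symm p).hasFDerivWithinAt) polarCoord.symm.injOn]
    at integrable_prod
  refine integrable_prod.congr_fun (fun p hp => ?_) polarCoord.open_target.measurableSet
  have fst_pos : 0 < p.1 := hp.1
  simp only [det_fderivPolarCoordSymm, abs_of_pos fst_pos, Function.comp_apply,
    Complex.measurableEquivRealProd_symm_polarCoord_symm_apply, polarCoord_symm_eq_circleMap]

theorem setIntegral_Ioo_comp_circleMap (f : ℂ → E) (c : ℂ) (r : ℝ) :
    ∫ θ in Ioo (-π) π, f (circleMap c r θ) = (2 * π) • circleAverage f c r := by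
  rw [circleAverage_eq_integral_add (-π),
    intervalIntegral.integral_comp_add_right (fun θ => f (circleMap c r θ)),
    smul_inv_smul₀ two_pi_pos.ne', ← integral_Ioc_eq_integral_Ioo,
    ← intervalIntegral.integral_of_le (by linarith [pi_pos])]
  ring_nf

theorem integral_eq_integral_circleAverage (hf : Integrable f) (c : ℂ) :
    ∫ z, f z = ∫ r in Ioi (0 : ℝ), (2 * π * r) • circleAverage f c r := by
  have integrable_polar := integrableOn_smul_comp_circleMap (hf.comp_add_right c)
  rw [← integral_add_right_eq_self f c, ← Complex.integral_comp_polarCoord_symm]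
  simp only [polarCoord_symm_eq_circleMap]
  rw [polarCoord_target, Measure.volume_eq_prod] at integrable_polar ⊢
  rw [setIntegral_prod _ integrable_polar]
  congr with r
  rw [integral_smul, setIntegral_Ioo_comp_circleMap (fun z => f (z + c)),
    circleAverage_map_add_const, smul_smul, mul_comm]

theorem setIntegral_ball_eq_integral_circleAverage {c : ℂ} {R : ℝ} (hR : 0 ≤ R)
    (hf : IntegrableOn f (ball c R)) :
    ∫ z in ball c R, f z = ∫ r in 0..R, (2 * π * r) • circleAverage f c r := by
  rw [← integral_indicator measurableSet_ball,
    integral_eq_integral_circleAverage (hf.integrable_indicator measurableSet_ball) c,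
    intervalIntegral.integral_of_le hR, integral_Ioc_eq_integral_Ioo]
  calc ∫ r in Ioi (0 : ℝ), (2 * π * r) • circleAverage ((ball c R).indicator f) c r
      = ∫ r in Ioo 0 R, (2 * π * r) • circleAverage ((ball c R).indicator f) c r := by
        refine setIntegral_eq_of_subset_of_forall_sdiff_eq_zero measurableSet_Ioi
          Ioo_subset_Ioi_self fun r hr => ?_
        have r_pos : 0 < r := hr.1
        have R_le : R ≤ r := not_lt.1 fun r_lt => hr.2 ⟨r_pos, r_lt⟩
        have indicator_eq_zero (θ : ℝ) : (ball c R).indicator f (circleMap c r θ) = 0 :=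
          indicator_of_notMem (fun h => circleMap_notMem_ball c r θ (ball_subset_ball R_le h)) f
        simp only [circleAverage, indicator_eq_zero, intervalIntegral.integral_zero, smul_zero]
    _ = ∫ r in Ioo 0 R, (2 * π * r) • circleAverage f c r := by
        refine setIntegral_congr_fun measurableSet_Ioo fun r ⟨r_pos, r_lt⟩ => ?_
        congr 1
        refine circleAverage_congr_sphere fun z hz => indicator_of_mem ?_ f
        rw [abs_of_pos r_pos] at hz
        exact sphere_subset_ball r_lt hz

end PolarCoordinates

section LogIm

theorem ae_im_ne_zero : ∀ᵐ z : ℂ, z.im ≠ 0 :=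
  Complex.volume_preserving_equiv_real_prod.quasiMeasurePreserving.ae
    (Measure.quasiMeasurePreserving_snd.ae (Measure.ae_ne volume 0))

theorem integrableOn_log_im {s : Set ℂ} (hs : Bornology.IsBounded s) :
    IntegrableOn (fun z : ℂ => log z.im) s := by
  obtain ⟨r, s_subset⟩ := hs.subset_closedBall 0
  have log_integrable : IntegrableOn log (Set.Icc (-r) r) :=
    (integrableOn_Icc_iff_integrableOn_Ioc (by simp)).2 intervalIntegral.intervalIntegrable_log'.1
  have prod_integrable :
      IntegrableOn (fun p : ℝ × ℝ => log p.2) (Set.Icc (-r) r ×ˢ Set.Icc (-r) r) := by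
    rw [IntegrableOn, Measure.volume_eq_prod, ← Measure.prod_restrict]
    exact Integrable.comp_snd log_integrable _
  refine ((Complex.volume_preserving_equiv_real_prod.integrableOn_comp_preimage
    Complex.measurableEquivRealProd.measurableEmbedding).2 prod_integrable).mono_set fun z hz => ?_
  have norm_le : ‖z‖ ≤ r := mem_closedBall_zero_iff.1 (s_subset hz)
  exact ⟨abs_le.1 ((Complex.abs_re_le_norm z).trans norm_le),
    abs_le.1 ((Complex.abs_im_le_norm z).trans norm_le)⟩

theorem abs_log_le_of_mul_sq_le {t m M y : ℝ} (hm : 0 < m) (hy : y ≠ 0) (hmt : m * y ^ 2 ≤ t)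
    (htM : t ≤ M) : |log t| ≤ |log M| + |log m| + 2 * |log y| := by
  have lower_pos : 0 < m * y ^ 2 := by positivity
  have lower : log m + 2 * log y ≤ log t := by
    simpa [log_mul hm.ne', hy] using log_le_log lower_pos hmt
  have upper : log t ≤ log M := log_le_log (lower_pos.trans_le hmt) htM
  rw [abs_le]
  constructor
  · linarith [neg_abs_le (log m), neg_abs_le (log y), abs_nonneg (log M)]
  · linarith [le_abs_self (log M), abs_nonneg (log m), abs_nonneg (log y)]

end LogIm

section Profile

/-- The denominator of the bubble profile `prof`, with the quadratic forms in `(x₁, x₂)` written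
as `φ² |1 - a x|² + k |x - a|²`. -/
def profDenom (a φ k : ℝ) (x : ℂ) : ℝ := φ ^ 2 * ‖1 - a * x‖ ^ 2 + k * ‖x - a‖ ^ 2

theorem prof_eq_two_mul_log_div_profDenom (a φ k : ℝ) (x : ℂ) :
    prof a φ k x = 2 * log (2 * (1 - a ^ 2) * φ / profDenom a φ k x) := by
  have norm_one_sub_mul : ‖1 - a * x‖ ^ 2 = (1 - a * x.re) ^ 2 + a ^ 2 * x.im ^ 2 := by
    simp only [Complex.sq_norm, Complex.normSq_apply, Complex.sub_re, Complex.sub_im,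
      Complex.one_re, Complex.one_im, Complex.re_ofReal_mul, Complex.im_ofReal_mul]
    ring
  have norm_sub : ‖x - a‖ ^ 2 = (x.re - a) ^ 2 + x.im ^ 2 := by
    simp only [Complex.sq_norm, Complex.normSq_apply, Complex.sub_re, Complex.sub_im,
      Complex.ofReal_re, Complex.ofReal_im]
    ring
  rw [prof, profDenom, norm_one_sub_mul, norm_sub]

theorem norm_one_sub_conj_mul_sq (a x : ℂ) :
    ‖1 - (starRingEnd ℂ) a * x‖ ^ 2 = ‖x - a‖ ^ 2 + (1 - ‖a‖ ^ 2) * (1 - ‖x‖ ^ 2) := by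
  simp only [Complex.sq_norm, Complex.normSq_apply, Complex.sub_re, Complex.sub_im, Complex.one_re,
    Complex.one_im, Complex.mul_re, Complex.mul_im, Complex.conj_re, Complex.conj_im]
  ring

theorem norm_one_sub_ofReal_mul_sq (a : ℝ) (x : ℂ) :
    ‖1 - a * x‖ ^ 2 = ‖x - a‖ ^ 2 + (1 - a ^ 2) * (1 - ‖x‖ ^ 2) := by
  simpa using norm_one_sub_conj_mul_sq a x

variable {a φ k : ℝ} {x : ℂ}

theorem profDenom_eq_add (a φ k : ℝ) (x : ℂ) : profDenom a φ k x =
    (φ ^ 2 + k) * ‖x - a‖ ^ 2 + φ ^ 2 * ((1 - a ^ 2) * (1 - ‖x‖ ^ 2)) := by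
  rw [profDenom, norm_one_sub_ofReal_mul_sq]
  ring

theorem profDenom_eq_sub (a φ k : ℝ) (x : ℂ) : profDenom a φ k x =
    (φ ^ 2 + k) * ‖1 - a * x‖ ^ 2 - k * ((1 - a ^ 2) * (1 - ‖x‖ ^ 2)) := by
  rw [profDenom, norm_one_sub_ofReal_mul_sq]
  ring

theorem profDenom_of_norm_eq_one (hx : ‖x‖ = 1) :
    profDenom a φ k x = (φ ^ 2 + k) * ‖1 - a * x‖ ^ 2 := by
  simp [profDenom_eq_sub, hx]

theorem profDenom_one (φ k : ℝ) (x : ℂ) : profDenom 1 φ k x = (φ ^ 2 + k) * ‖1 - x‖ ^ 2 := by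
  simp [profDenom_eq_sub]

-- A lower bound in terms of `x₂` alone gives a logarithmic majorant that does not move with `a`.
theorem mul_im_sq_le_profDenom (ha : |a| ≤ 1) (hk : 0 ≤ φ ^ 2 + k) (hx : ‖x‖ ≤ 1) :
    (φ ^ 2 + k) * a ^ 2 * x.im ^ 2 ≤ profDenom a φ k x := by
  have a_sq_le_one : a ^ 2 ≤ 1 := (sq_le_one_iff_abs_le_one a).2 ha
  have gap_nonneg : 0 ≤ (1 - a ^ 2) * (1 - ‖x‖ ^ 2) :=
    mul_nonneg (sub_nonneg.2 a_sq_le_one) (sub_nonneg.2 (pow_le_one₀ (norm_nonneg x) hx))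
  rw [mul_assoc]
  obtain k_nonneg | k_nonpos := le_total 0 k
  · have im_le : a ^ 2 * x.im ^ 2 ≤ ‖x - a‖ ^ 2 := by
      calc a ^ 2 * x.im ^ 2 ≤ x.im ^ 2 := mul_le_of_le_one_left (sq_nonneg _) a_sq_le_one
        _ ≤ ‖x - a‖ ^ 2 := sq_le_sq.2 (by simpa using Complex.abs_im_le_norm (x - a))
    rw [profDenom_eq_add]
    exact le_add_of_le_of_nonneg (by gcongr) (by positivity)
  · have im_le : a ^ 2 * x.im ^ 2 ≤ ‖1 - a * x‖ ^ 2 := by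
      rw [← mul_pow]
      exact sq_le_sq.2 (by simpa using Complex.abs_im_le_norm (1 - a * x))
    rw [profDenom_eq_sub, sub_eq_add_neg, ← neg_mul]
    exact le_add_of_le_of_nonneg (by gcongr) (mul_nonneg (neg_nonneg.2 k_nonpos) gap_nonneg)

theorem profDenom_le (ha : |a| ≤ 1) (hx : ‖x‖ ≤ 1) :
    profDenom a φ k x ≤ (φ ^ 2 + |k|) * 4 := by
  have one_sub_le : ‖1 - a * x‖ ≤ 2 := by
    calc ‖1 - a * x‖ ≤ ‖(1 : ℂ)‖ + ‖a * x‖ := norm_sub_le _ _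
      _ ≤ 1 + 1 := by
        rw [norm_one, norm_mul, Complex.norm_real, norm_eq_abs]
        gcongr
        exact mul_le_one₀ ha (norm_nonneg x) hx
      _ = 2 := by norm_num
  have sub_le : ‖x - a‖ ≤ 2 := by
    calc ‖x - a‖ ≤ ‖x‖ + ‖(a : ℂ)‖ := norm_sub_le _ _
      _ ≤ 1 + 1 := by
        rw [Complex.norm_real, norm_eq_abs]
        gcongr
      _ = 2 := by norm_num
  calc profDenom a φ k x ≤ φ ^ 2 * ‖1 - a * x‖ ^ 2 + |k| * ‖x - a‖ ^ 2 := by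
        unfold profDenom
        gcongr
        exact le_abs_self k
    _ ≤ φ ^ 2 * 2 ^ 2 + |k| * 2 ^ 2 := by gcongr
    _ = (φ ^ 2 + |k|) * 4 := by ring

theorem measurable_profDenom (a φ k : ℝ) : Measurable (profDenom a φ k) := by
  unfold profDenom
  fun_prop

theorem continuous_profDenom_parameters (x : ℂ) :
    Continuous fun p : ℝ × ℝ × ℝ => profDenom p.1 p.2.1 p.2.2 x := by
  unfold profDenom
  fun_prop

end Profile

section Boundary

theorem bint_eq_two_pi_mul_circleAverage (f : ℂ → ℝ) : bint f = 2 * π * circleAverage f 0 1 := by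
  simp only [bint, bpt, circleAverage, circleMap, zero_add, Complex.ofReal_one, one_mul,
    smul_eq_mul, mul_inv_cancel_left₀ two_pi_pos.ne']

theorem bint_re_mul_prof {a φ k : ℝ} (ha : |a| < 1) (hφ : φ ≠ 0) (hk : φ ^ 2 + k ≠ 0) :
    bint (fun x => x.re * prof a φ k x) = 4 * π * a := by
  have one_sub_ne : 1 - a ^ 2 ≠ 0 := (sub_pos.2 ((sq_lt_one_iff_abs_lt_one a).2 ha)).ne'
  let C : ℝ := (φ ^ 2 + k) / (2 * (1 - a ^ 2) * φ)
  have C_ne : C ≠ 0 := by positivity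
  have prof_eqOn : Set.EqOn (fun x => x.re * prof a φ k x)
      (fun x => (-2 : ℝ) • (x.re * log (C * ‖1 - a * x‖ ^ 2))) (Metric.sphere 0 |1|) := by
    intro x hx
    have norm_x : ‖x‖ = 1 := by simpa using hx
    simp only [prof_eq_two_mul_log_div_profDenom, profDenom_of_norm_eq_one norm_x, smul_eq_mul, C]
    rw [← inv_div, log_inv, mul_div_right_comm]
    ring
  rw [bint_eq_two_pi_mul_circleAverage, circleAverage_congr_sphere prof_eqOn,
    circleAverage_fun_smul, circleAverage_re_mul_log_mul_norm_one_sub_mul_sq C_ne (by simpa)]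
  simp only [Complex.ofReal_re, smul_eq_mul]
  ring

end Boundary

section Disk

theorem measurableSet_unitDisk : MeasurableSet unitDisk := Metric.isOpen_ball.measurableSet

theorem norm_lt_one_of_mem_unitDisk {x : ℂ} (hx : x ∈ unitDisk) : ‖x‖ < 1 :=
  mem_ball_zero_iff.1 hx

theorem integrableOn_ball_re_sub (c : ℂ) (R : ℝ) :
    IntegrableOn (fun z : ℂ => (z - c).re) (Metric.ball c R) :=
  (ContinuousOn.integrableOn_compact (isCompact_closedBall c R) (by fun_prop)).mono_set
    Metric.ball_subset_closedBall

theorem setIntegral_ball_re_sub (c : ℂ) {R : ℝ} (hR : 0 ≤ R) :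
    ∫ z in Metric.ball c R, (z - c).re = 0 := by
  simp only [setIntegral_ball_eq_integral_circleAverage hR (integrableOn_ball_re_sub c R),
    circleAverage_re_sub, smul_zero, intervalIntegral.integral_zero]

theorem integrableOn_const_add_two_mul_abs_log_im (C : ℝ) :
    IntegrableOn (fun x : ℂ => C + 2 * |log x.im|) unitDisk :=
  (integrableOn_const measure_ball_lt_top.ne).add
    ((integrableOn_log_im Metric.isBounded_ball).abs.const_mul 2)

variable {a φ k : ℝ}

theorem aestronglyMeasurable_re_mul_log_profDenom (a φ k : ℝ) (μ : Measure ℂ) :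
    AEStronglyMeasurable (fun x => x.re * log (profDenom a φ k x)) μ :=
  (Complex.measurable_re.mul (measurable_profDenom a φ k).log).aestronglyMeasurable

theorem ae_norm_re_mul_log_profDenom_le {m M : ℝ} (ha : |a| ≤ 1) (hm : 0 < m)
    (hmk : m ≤ (φ ^ 2 + k) * a ^ 2) (hkM : (φ ^ 2 + |k|) * 4 ≤ M) :
    ∀ᵐ x ∂volume.restrict unitDisk,
      ‖x.re * log (profDenom a φ k x)‖ ≤ |log M| + |log m| + 2 * |log x.im| := by
  filter_upwards [ae_restrict_mem measurableSet_unitDisk, ae_restrict_of_ae ae_im_ne_zero]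
    with x hx im_ne
  have norm_le := (norm_lt_one_of_mem_unitDisk hx).le
  have sum_nonneg : 0 ≤ φ ^ 2 + k := (pos_of_mul_pos_left (hm.trans_le hmk) (sq_nonneg a)).le
  have lower : m * x.im ^ 2 ≤ profDenom a φ k x :=
    (mul_le_mul_of_nonneg_right hmk (sq_nonneg _)).trans
      (mul_im_sq_le_profDenom ha sum_nonneg norm_le)
  have upper : profDenom a φ k x ≤ M := (profDenom_le ha norm_le).trans hkM
  calc ‖x.re * log (profDenom a φ k x)‖ = |x.re| * |log (profDenom a φ k x)| := abs_mul _ _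
    _ ≤ |log (profDenom a φ k x)| :=
        mul_le_of_le_one_left (abs_nonneg _) ((Complex.abs_re_le_norm x).trans norm_le)
    _ ≤ |log M| + |log m| + 2 * |log x.im| := abs_log_le_of_mul_sq_le hm im_ne lower upper

theorem integrableOn_re_mul_log_profDenom (ha : |a| ≤ 1) (ha₀ : a ≠ 0) (hk : 0 < φ ^ 2 + k) :
    IntegrableOn (fun x => x.re * log (profDenom a φ k x)) unitDisk :=
  (integrableOn_const_add_two_mul_abs_log_im _).mono'
    (aestronglyMeasurable_re_mul_log_profDenom a φ k _)
    (ae_norm_re_mul_log_profDenom_le ha (by positivity) le_rfl le_rfl)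

theorem setIntegral_re_mul_log_profDenom_one (hk : 0 < φ ^ 2 + k) :
    ∫ x in unitDisk, x.re * log (profDenom 1 φ k x) = -π / 2 := by
  have integrable := integrableOn_re_mul_log_profDenom (a := 1) (by simp) one_ne_zero hk
  rw [unitDisk, setIntegral_ball_eq_integral_circleAverage zero_le_one integrable]
  calc ∫ r in (0 : ℝ)..1, (2 * π * r) • circleAverage (fun x => x.re * log (profDenom 1 φ k x)) 0 r
      = ∫ r in (0 : ℝ)..1, -2 * π * r ^ 3 := by
        refine intervalIntegral.integral_congr_Ioo_of_le zero_le_one fun r hr => ?_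
        have average_eq := circleAverage_re_mul_log_mul_norm_one_sub_mul_sq (R := r) (w := 1) hk.ne'
          (by simpa [abs_of_pos hr.1] using hr.2)
        simp only [one_mul, Complex.one_re] at average_eq
        simp only [profDenom_one, average_eq, smul_eq_mul]
        ring
    _ = -π / 2 := by
        rw [intervalIntegral.integral_const_mul, integral_pow]
        ring

theorem setIntegral_re_mul_prof (ha : |a| < 1) (ha₀ : a ≠ 0) (hφ : φ ≠ 0) (hk : 0 < φ ^ 2 + k) :
    ∫ x in unitDisk, x.re * prof a φ k x =
      -2 * ∫ x in unitDisk, x.re * log (profDenom a φ k x) := by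
  let N : ℝ := 2 * (1 - a ^ 2) * φ
  have N_ne : N ≠ 0 := by
    have one_sub_ne : 1 - a ^ 2 ≠ 0 := (sub_pos.2 ((sq_lt_one_iff_abs_lt_one a).2 ha)).ne'
    positivity
  have re_mul_prof_ae_eq : ∀ᵐ x ∂volume.restrict unitDisk, x.re * prof a φ k x =
      2 * log N * (x - 0).re + -2 * (x.re * log (profDenom a φ k x)) := by
    filter_upwards [ae_restrict_mem measurableSet_unitDisk, ae_restrict_of_ae ae_im_ne_zero]
      with x hx im_ne
    have lower_pos : 0 < (φ ^ 2 + k) * a ^ 2 * x.im ^ 2 := by positivity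
    have denom_pos : 0 < profDenom a φ k x :=
      lower_pos.trans_le (mul_im_sq_le_profDenom ha.le hk.le (norm_lt_one_of_mem_unitDisk hx).le)
    rw [prof_eq_two_mul_log_div_profDenom, log_div N_ne denom_pos.ne', sub_zero]
    ring
  have re_integrable : IntegrableOn (fun x : ℂ => (x - 0).re) unitDisk :=
    integrableOn_ball_re_sub 0 1
  have re_integral : ∫ x in unitDisk, (x - 0).re = 0 := setIntegral_ball_re_sub 0 zero_le_one
  rw [integral_congr_ae re_mul_prof_ae_eq, integral_add (re_integrable.const_mul _)
      ((integrableOn_re_mul_log_profDenom ha.le ha₀ hk).const_mul _),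
    integral_const_mul, integral_const_mul, re_integral, mul_zero, zero_add]

end Disk

section Limits

variable {ι : Type*} {l : Filter ι} {a φ k : ι → ℝ} {φl kl : ℝ}

theorem tendsto_setIntegral_re_mul_log_profDenom [l.IsCountablyGenerated]
    (ha : ∀ᶠ i in l, |a i| ≤ 1) (ha_lim : Tendsto a l (nhds 1)) (hφ_lim : Tendsto φ l (nhds φl))
    (hk_lim : Tendsto k l (nhds kl)) (hlim : 0 < φl ^ 2 + kl) :
    Tendsto (fun i => ∫ x in unitDisk, x.re * log (profDenom (a i) (φ i) (k i) x)) l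
      (nhds (-π / 2)) := by
  have lower : ∀ᶠ i in l, (φl ^ 2 + kl) / 2 ≤ (φ i ^ 2 + k i) * a i ^ 2 :=
    (((hφ_lim.pow 2).add hk_lim).mul (ha_lim.pow 2)).eventually_const_le (by linarith)
  have upper : ∀ᶠ i in l, (φ i ^ 2 + |k i|) * 4 ≤ (φl ^ 2 + |kl|) * 4 + 1 :=
    (((hφ_lim.pow 2).add hk_lim.abs).mul_const 4).eventually_le_const (by linarith)
  rw [← setIntegral_re_mul_log_profDenom_one hlim]
  refine tendsto_integral_filter_of_dominated_convergence
    (fun x => |log ((φl ^ 2 + |kl|) * 4 + 1)| + |log ((φl ^ 2 + kl) / 2)| + 2 * |log x.im|)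
    (.of_forall fun i => aestronglyMeasurable_re_mul_log_profDenom _ _ _ _) ?_
    (integrableOn_const_add_two_mul_abs_log_im _) ?_
  · filter_upwards [ha, lower, upper] with i ha_i lower_i upper_i
    exact ae_norm_re_mul_log_profDenom_le ha_i (half_pos hlim) lower_i upper_i
  · filter_upwards [ae_restrict_mem measurableSet_unitDisk] with x hx
    have one_sub_ne : 1 - x ≠ 0 := by
      intro h
      simpa [← sub_eq_zero.1 h] using norm_lt_one_of_mem_unitDisk hx
    have denom_ne : profDenom 1 φl kl x ≠ 0 := by
      rw [profDenom_one]
      positivity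
    exact (((continuous_profDenom_parameters x).tendsto (1, φl, kl)).comp
      (ha_lim.prodMk_nhds (hφ_lim.prodMk_nhds hk_lim))).log denom_ne |>.const_mul x.re

theorem profile_integral_limits_general [l.IsCountablyGenerated]
    (ha : ∀ᶠ i in l, a i < 1) (ha_lim : Tendsto a l (nhds 1)) (hφ : ∀ᶠ i in l, 0 < φ i)
    (hφ_lim : Tendsto φ l (nhds φl)) (hk_lim : Tendsto k l (nhds kl)) (hlim : 0 < φl ^ 2 + kl) :
    Tendsto (fun i => ∫ x in unitDisk, x.re * prof (a i) (φ i) (k i) x) l (nhds π) ∧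
    Tendsto (fun i => bint (fun x => x.re * prof (a i) (φ i) (k i) x)) l (nhds (4 * π)) := by
  have a_pos : ∀ᶠ i in l, 0 < a i := ha_lim.eventually_const_lt one_pos
  have abs_lt : ∀ᶠ i in l, |a i| < 1 := by
    filter_upwards [ha, a_pos] with i lt pos
    rwa [abs_of_pos pos]
  have sum_pos : ∀ᶠ i in l, 0 < φ i ^ 2 + k i :=
    ((hφ_lim.pow 2).add hk_lim).eventually_const_lt hlim
  constructor
  · have log_lim := (tendsto_setIntegral_re_mul_log_profDenom (abs_lt.mono fun _ => le_of_lt)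
      ha_lim hφ_lim hk_lim hlim).const_mul (-2)
    rw [show -2 * (-π / 2) = π by ring] at log_lim
    refine log_lim.congr' ?_
    filter_upwards [abs_lt, a_pos, hφ, sum_pos] with i lt pos φ_pos sum_pos
    exact (setIntegral_re_mul_prof lt pos.ne' φ_pos.ne' sum_pos).symm
  · have a_lim : Tendsto (fun i => 4 * π * a i) l (nhds (4 * π)) := by
      simpa using ha_lim.const_mul (4 * π)
    refine a_lim.congr' ?_
    filter_upwards [abs_lt, hφ, sum_pos] with i lt φ_pos sum_pos
    exact (bint_re_mul_prof lt φ_pos.ne' sum_pos.ne').symm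

end Limits

/-- Appendix Lemma: limits of ∫_𝔻 x₁ u_{a_n} and ∫_{∂𝔻} x₁ u_{a_n}. -/
theorem profile_integral_limits
    (a φ k : ℕ → ℝ) (φl kl δb : ℝ)
    (ha1 : ∀ n, a n ∈ Set.Ioo (0:ℝ) 1) (ha2 : Tendsto a atTop (nhds 1))
    (hφpos : ∀ n, 0 < φ n) (hkneg : ∀ n, k n < 0)
    (hφlim : Tendsto φ atTop (nhds φl)) (hklim : Tendsto k atTop (nhds kl))
    (hlim : 0 < φl ^ 2 + kl)
    (hδ : 0 < δb) (hsep : ∀ n, δb ≤ φ n ^ 2 + k n) :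
    Tendsto (fun n => ∫ x in unitDisk, x.re * prof (a n) (φ n) (k n) x)
      atTop (nhds π) ∧
    Tendsto (fun n => bint (fun x => x.re * prof (a n) (φ n) (k n) x))
      atTop (nhds (4 * π)) :=
  profile_integral_limits_general (.of_forall fun n => (ha1 n).2) ha2 (.of_forall hφpos)
    hφlim hklim hlim

end
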